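/- Let n ≥ 3. There is a constant C depending only on n such that for every Schwartz function ψ on ℝⁿ, the convolution of ψ with the Riesz kernel |x|^{2−n} satisfies ‖ ∫_{ℝⁿ} ψ(y) |x − y|^{2−n} dy ‖_{L^{2n/(n−2)}_x(ℝⁿ)} ≤ C ‖⟨x⟩ψ‖_{L²(ℝⁿ)}. -/

import Mathlib

open MeasureTheory Complex FourierTransform
open scoped ENNReal Real

noncomputable section

open Module

section RieszPotential

variable {E : Type*} [NormedAddCommGroup E] [NormedSpace ℝ E] [FiniteDimensional ℝ E]
  [MeasurableSpace E] [BorelSpace E] {μ : Measure E} [μ.IsAddHaarMeasure]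

lemma ENNReal.rpow_neg_le_rpow_neg {r x : ℝ≥0∞} {s : ℝ} (hs : 0 ≤ s) (h : r ≤ x) :
    x ^ (-s) ≤ r ^ (-s) := by
  rw [ENNReal.rpow_neg, ENNReal.rpow_neg]
  gcongr

lemma lintegral_ball_enorm_rpow_neg_lt_top (hd : 1 ≤ finrank ℝ E) {t : ℝ}
    (ht : t < finrank ℝ E) (r : ℝ) :
    ∫⁻ y in Metric.ball (0 : E) r, ‖y‖ₑ ^ (-t) ∂μ < ⊤ := by
  have : Nontrivial E := finrank_pos_iff (R := ℝ).mp hd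
  have h : IntegrableOn (fun y : E ↦ ‖y‖ ^ (-t)) (Metric.ball 0 r) μ := by
    refine integrableOn_ball_of_norm_le_rpow (C := 1) (α := t) hd ht ?_ ?_
    · refine Filter.Eventually.of_forall fun y ↦ ?_
      rw [Real.norm_of_nonneg (by positivity), one_mul]
    · exact (measurable_norm.pow_const _).aestronglyMeasurable
  refine lt_of_le_of_lt (lintegral_mono_ae ?_) h.hasFiniteIntegral
  filter_upwards [ae_restrict_of_ae (Measure.ae_ne μ 0)] with y hy
  have hy' : 0 < ‖y‖ := norm_pos_iff.mpr hy
  rw [← ofReal_norm, ENNReal.ofReal_rpow_of_pos hy', Real.enorm_of_nonneg (by positivity)]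

lemma lintegral_compl_ball_enorm_rpow_neg_lt_top {u : ℝ} (hu : finrank ℝ E < u) :
    ∫⁻ y in (Metric.ball (0 : E) 2⁻¹)ᶜ, ‖y‖ₑ ^ (-u) ∂μ < ⊤ := by
  have hu0 : 0 ≤ u := (Nat.cast_nonneg _).trans hu.le
  have h := finite_integral_one_add_norm (μ := μ) hu
  have hc : (ENNReal.ofReal ((3 : ℝ) ^ u)) * ∫⁻ y : E, ENNReal.ofReal ((1 + ‖y‖) ^ (-u)) ∂μ < ⊤ :=
    ENNReal.mul_lt_top ENNReal.ofReal_lt_top h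
  refine lt_of_le_of_lt ?_ hc
  rw [← lintegral_const_mul' _ _ ENNReal.ofReal_ne_top]
  refine (setLIntegral_mono' measurableSet_ball.compl fun y hy ↦ ?_).trans
    (setLIntegral_le_lintegral _ _)
  have hy' : (2 : ℝ)⁻¹ ≤ ‖y‖ := by simpa using hy
  have hy0 : 0 < ‖y‖ := by linarith [show (0 : ℝ) < 2⁻¹ by norm_num]
  rw [← ofReal_norm, ENNReal.ofReal_rpow_of_pos hy0, ← ENNReal.ofReal_mul (by positivity)]
  apply ENNReal.ofReal_le_ofReal
  calc ‖y‖ ^ (-u) = 3 ^ u * (3 * ‖y‖) ^ (-u) := by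
        rw [Real.mul_rpow (by norm_num) hy0.le, ← mul_assoc, ← Real.rpow_add (by norm_num)]
        simp
    _ ≤ 3 ^ u * (1 + ‖y‖) ^ (-u) := by
        gcongr 3 ^ u * ?_
        exact Real.rpow_le_rpow_of_nonpos (by positivity) (by linarith) (by linarith)

lemma exists_lintegral_rpow_neg_mul_rpow_neg_le_of_norm_eq_one (hd : 1 ≤ finrank ℝ E) {s t : ℝ}
    (hs0 : 0 ≤ s) (ht0 : 0 ≤ t) (hs : s < finrank ℝ E) (ht : t < finrank ℝ E)
    (hst : finrank ℝ E < s + t) :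
    ∃ C : ℝ≥0∞, C ≠ ⊤ ∧ ∀ x : E, ‖x‖ = 1 →
      ∫⁻ y, ‖x - y‖ₑ ^ (-s) * ‖y‖ₑ ^ (-t) ∂μ ≤ C := by
  set B : Set E := Metric.ball 0 2⁻¹ with hB
  have hBm : MeasurableSet B := measurableSet_ball
  let F : ℝ → ℝ → E → ℝ≥0∞ := fun s t y ↦
    B.indicator (fun y ↦ (2⁻¹ : ℝ≥0∞) ^ (-s) * ‖y‖ₑ ^ (-t)) y
      + Bᶜ.indicator (fun y ↦ ‖y‖ₑ ^ (-(s + t))) y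
  have hm (t : ℝ) : Measurable fun y : E ↦ ‖y‖ₑ ^ t := measurable_enorm.pow_const _
  have hFm (s t : ℝ) : Measurable (F s t) :=
    (((hm _).const_mul _).indicator hBm).add ((hm _).indicator hBm.compl)
  have hF (s t : ℝ) (ht : t < finrank ℝ E) (hst : finrank ℝ E < s + t) :
      ∫⁻ y, F s t y ∂μ ≠ ⊤ := by
    rw [lintegral_add_left (((hm _).const_mul _).indicator hBm), lintegral_indicator hBm,
      lintegral_indicator hBm.compl, lintegral_const_mul _ (hm _)]
    refine (ENNReal.add_lt_top.mpr ⟨ENNReal.mul_lt_top ?_ ?_, ?_⟩).ne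
    · exact (ENNReal.rpow_ne_top_of_ne_zero (by simp) (by simp)).lt_top
    · exact lintegral_ball_enorm_rpow_neg_lt_top hd ht _
    · exact lintegral_compl_ball_enorm_rpow_neg_lt_top hst
  refine ⟨∫⁻ y, F s t y ∂μ + ∫⁻ y, F t s y ∂μ,
    ENNReal.add_ne_top.mpr ⟨hF s t ht hst, hF t s hs (by linarith)⟩, fun x hx ↦ ?_⟩
  have key (s t : ℝ) (hs0 : 0 ≤ s) (v w : E)
      (hvw : ‖v + w‖ = 1) (hle : ‖w‖ ≤ ‖v‖) : ‖v‖ₑ ^ (-s) * ‖w‖ₑ ^ (-t) ≤ F s t w := by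
    have hn : 1 ≤ ‖v‖ + ‖w‖ := hvw ▸ norm_add_le v w
    by_cases hw : w ∈ B
    · have hv : (2⁻¹ : ℝ≥0∞) ≤ ‖v‖ₑ := by
        rw [← ofReal_norm, ENNReal.le_ofReal_iff_toReal_le (by simp) (by simp)]
        simp
        linarith [show (2 : ℝ)⁻¹ = 1 / 2 by norm_num]
      simp only [F, Set.indicator_of_mem hw]
      refine le_add_right ?_
      gcongr ?_ * _
      exact ENNReal.rpow_neg_le_rpow_neg hs0 hv
    · have hw' : w ∈ Bᶜ := hw
      have hw0 : ‖w‖ₑ ≠ 0 := by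
        rintro h
        simp [hB] at h hw
        norm_num [h] at hw
      simp only [F, Set.indicator_of_mem hw']
      refine le_add_left ?_
      rw [neg_add, ENNReal.rpow_add _ _ hw0 (by simp)]
      gcongr ?_ * _
      exact ENNReal.rpow_neg_le_rpow_neg hs0 (enorm_le_iff_norm_le.mpr hle)
  calc ∫⁻ y, ‖x - y‖ₑ ^ (-s) * ‖y‖ₑ ^ (-t) ∂μ
      ≤ ∫⁻ y, F s t y + F t s (x - y) ∂μ := by
        refine lintegral_mono fun y ↦ ?_
        rcases le_total ‖y‖ ‖x - y‖ with h | h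
        · exact le_add_right (key s t hs0 _ _ (by simpa using hx) h)
        · rw [mul_comm]
          exact le_add_left (key t s ht0 _ _ (by simpa using hx) h)
    _ = _ := by
        rw [lintegral_add_left (hFm s t), lintegral_sub_left_eq_self (F t s) x]

lemma exists_lintegral_rpow_neg_mul_rpow_neg_le (hd : 1 ≤ finrank ℝ E) {s t : ℝ}
    (hs0 : 0 ≤ s) (ht0 : 0 ≤ t) (hs : s < finrank ℝ E) (ht : t < finrank ℝ E)
    (hst : finrank ℝ E < s + t) :
    ∃ C : ℝ≥0∞, C ≠ ⊤ ∧ ∀ x : E, x ≠ 0 →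
      ∫⁻ y, ‖x - y‖ₑ ^ (-s) * ‖y‖ₑ ^ (-t) ∂μ ≤ C * ‖x‖ₑ ^ (finrank ℝ E - s - t) := by
  obtain ⟨C, hC, h⟩ :=
    exists_lintegral_rpow_neg_mul_rpow_neg_le_of_norm_eq_one (μ := μ) hd hs0 ht0 hs ht hst
  refine ⟨C, hC, fun x hx ↦ ?_⟩
  set r := ‖x‖ with hr
  have hr0 : 0 < r := norm_pos_iff.mpr hx
  have hre : ‖r‖ₑ = ‖x‖ₑ := by simp [hr]
  have hx0 : ‖x‖ₑ ≠ 0 := by simpa using hx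
  have hu := h (r⁻¹ • x) (by rw [norm_smul, norm_inv, norm_norm]; exact inv_mul_cancel₀ hr0.ne')
  have hm' : Measurable fun y : E ↦ ‖r⁻¹ • x - y‖ₑ ^ (-s) * ‖y‖ₑ ^ (-t) := by fun_prop
  have hmap := Measure.map_addHaar_smul μ (inv_ne_zero hr0.ne')
  have hpt (y : E) : ‖x - y‖ₑ ^ (-s) * ‖y‖ₑ ^ (-t) = ‖x‖ₑ ^ (-s - t) *
      (‖r⁻¹ • x - r⁻¹ • y‖ₑ ^ (-s) * ‖r⁻¹ • y‖ₑ ^ (-t)) := by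
    have h1 (v : E) : ‖v‖ₑ = ‖x‖ₑ * ‖r⁻¹ • v‖ₑ := by
      rw [← hre, ← enorm_smul, smul_inv_smul₀ hr0.ne']
    have h2 (v : E) (p : ℝ) : ‖v‖ₑ ^ p = ‖x‖ₑ ^ p * ‖r⁻¹ • v‖ₑ ^ p := by
      rw [← ENNReal.mul_rpow_of_ne_top (by simp) (by simp), ← h1]
    rw [h2 (x - y), h2 y, smul_sub, sub_eq_add_neg (-s), ENNReal.rpow_add _ _ hx0 (by simp)]
    ring
  calc ∫⁻ y, ‖x - y‖ₑ ^ (-s) * ‖y‖ₑ ^ (-t) ∂μ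
      = ‖x‖ₑ ^ (-s - t) * ∫⁻ y, ‖r⁻¹ • x - y‖ₑ ^ (-s) * ‖y‖ₑ ^ (-t)
          ∂(Measure.map (r⁻¹ • ·) μ) := by
        rw [lintegral_map hm' (by fun_prop), ← lintegral_const_mul _ (by fun_prop)]
        exact lintegral_congr hpt
    _ ≤ ‖x‖ₑ ^ (-s - t) * (‖x‖ₑ ^ (finrank ℝ E : ℝ) * C) := by
        rw [hmap, lintegral_smul_measure, smul_eq_mul]
        gcongr
        rw [inv_pow, inv_inv, abs_of_pos (by positivity), ENNReal.ofReal_pow hr0.le, hr,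
          ofReal_norm, ENNReal.rpow_natCast]
    _ = C * ‖x‖ₑ ^ (finrank ℝ E - s - t) := by
        rw [show (finrank ℝ E : ℝ) - s - t = (-s - t) + finrank ℝ E by ring,
          ENNReal.rpow_add _ _ hx0 (by simp)]
        ring

/-- A weighted estimate of Stein–Weiss type, for nonnegative functions. -/
lemma exists_lintegral_riesz_potential_rpow_le (hd : 3 ≤ finrank ℝ E) {q : ℝ}
    (hq : q = 2 * finrank ℝ E / (finrank ℝ E - 2)) :
    ∃ C : ℝ≥0∞, C ≠ ⊤ ∧ ∀ f : E → ℝ≥0∞, Measurable f →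
      ∫⁻ x, (∫⁻ y, f y * ‖x - y‖ₑ ^ (2 - finrank ℝ E : ℝ) ∂μ) ^ q ∂μ
        ≤ C * (∫⁻ y, (‖y‖ₑ * f y) ^ (2 : ℝ) ∂μ) ^ (q / 2) := by
  have : Nontrivial E := finrank_pos_iff (R := ℝ).mp (by omega)
  obtain ⟨d, hdef⟩ : ∃ d : ℝ, d = finrank ℝ E := ⟨_, rfl⟩
  have hd3 : 3 ≤ d := by rw [hdef]; exact_mod_cast hd
  rw [← hdef] at hq ⊢
  have hd2 : 0 < d - 2 := by linarith
  have hq0 : 0 < q := by rw [hq]; positivity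
  have hqd : q * (d - 2) = 2 * d := by rw [hq]; field_simp
  -- Hölder's inequality is applied to a splitting of the kernel governed by these two exponents.
  obtain ⟨a, ha⟩ : ∃ a : ℝ, a = (d - 2) / 2 + 1 / 5 := ⟨_, rfl⟩
  obtain ⟨b, hb⟩ : ∃ b : ℝ, b = 6 / 5 := ⟨_, rfl⟩
  obtain ⟨C₁, hC₁, h₁⟩ := exists_lintegral_rpow_neg_mul_rpow_neg_le (E := E) (μ := μ)
    (s := 2 * a) (t := 2 * b) (by omega) (by linarith) (by linarith) (by linarith) (by linarith)
    (by linarith)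
  obtain ⟨C₂, hC₂, h₂⟩ := exists_lintegral_rpow_neg_mul_rpow_neg_le (E := E) (μ := μ)
    (s := (d - 2 - a) * q) (t := (a + b - d / 2) * q) (by omega)
    (by apply mul_nonneg _ hq0.le; linarith) (by apply mul_nonneg _ hq0.le; linarith)
    (by rw [← hdef]; nlinarith) (by rw [← hdef]; nlinarith) (by rw [← hdef]; nlinarith)
  rw [← hdef] at h₁ h₂
  refine ⟨C₁ ^ (q / 2) * C₂, ENNReal.mul_ne_top
    (ENNReal.rpow_ne_top_of_nonneg (by positivity) hC₁) hC₂, fun f hf ↦ ?_⟩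
  set g : E → ℝ≥0∞ := fun y ↦ (‖y‖ₑ * f y) ^ (2 : ℝ) with hg
  have hgm : Measurable g := by fun_prop
  set G := ∫⁻ y, g y ∂μ
  set K : E → E → ℝ≥0∞ := fun x y ↦ ‖x - y‖ₑ ^ (-((d - 2 - a) * q)) * ‖y‖ₑ ^ ((b - 1) * q) with hK
  have hKm : Measurable fun p : E × E ↦ K p.1 p.2 := by fun_prop
  have hKgm (x : E) : Measurable fun y ↦ K x y * g y :=
    (hKm.comp measurable_prodMk_left).mul hgm
  have pointwise (x y : E) (hy : y ≠ 0) (hxy : y ≠ x) : f y * ‖x - y‖ₑ ^ (2 - d) =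
      (K x y * g y) ^ q⁻¹ * g y ^ d⁻¹ *
        (‖x - y‖ₑ ^ (-(2 * a)) * ‖y‖ₑ ^ (-(2 * b))) ^ (2 : ℝ)⁻¹ := by
    have hX : ‖x - y‖ₑ ≠ 0 := by simpa [sub_eq_zero] using hxy.symm
    have hY : ‖y‖ₑ ≠ 0 := by simpa using hy
    have hgf : g y ^ q⁻¹ * g y ^ d⁻¹ = ‖y‖ₑ * f y := by
      rw [← ENNReal.rpow_add_of_nonneg _ _ (by positivity) (by positivity), hg,
        ← ENNReal.rpow_mul]
      convert ENNReal.rpow_one _ using 2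
      rw [hq]
      field_simp
      ring
    have e1 : -((d - 2 - a) * q) * q⁻¹ = -(d - 2 - a) := by field_simp
    have e2 : (b - 1) * q * q⁻¹ = b - 1 := by field_simp
    have e3 : -(2 * a) * (2 : ℝ)⁻¹ = -a := by ring
    have e4 : -(2 * b) * (2 : ℝ)⁻¹ = -b := by ring
    have e5 : 2 - d = -(d - 2 - a) + -a := by ring
    have e6 : ‖y‖ₑ ^ (b - 1) * ‖y‖ₑ ^ (-b) * ‖y‖ₑ = 1 := by
      rw [← ENNReal.rpow_add _ _ hY (by simp)]
      nth_rw 2 [← ENNReal.rpow_one ‖y‖ₑ]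
      rw [← ENNReal.rpow_add _ _ hY (by simp)]
      ring_nf
      simp
    have hKq : K x y ^ q⁻¹ = ‖x - y‖ₑ ^ (-(d - 2 - a)) * ‖y‖ₑ ^ (b - 1) := by
      rw [hK, ENNReal.mul_rpow_of_nonneg _ _ (by positivity), ← ENNReal.rpow_mul,
        ← ENNReal.rpow_mul, e1, e2]
    rw [ENNReal.mul_rpow_of_nonneg (K x y) (g y) (by positivity), hKq,
      ENNReal.mul_rpow_of_nonneg _ _ (by positivity), ← ENNReal.rpow_mul ‖x - y‖ₑ,
      ← ENNReal.rpow_mul ‖y‖ₑ, e3, e4, e5, ENNReal.rpow_add _ _ hX (by simp)]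
    calc _ = (‖y‖ₑ ^ (b - 1) * ‖y‖ₑ ^ (-b) * ‖y‖ₑ) * f y *
          (‖x - y‖ₑ ^ (-(d - 2 - a)) * ‖x - y‖ₑ ^ (-a)) := by rw [e6, one_mul]
      _ = (‖y‖ₑ * f y) * (‖y‖ₑ ^ (b - 1) * ‖y‖ₑ ^ (-b)) *
          (‖x - y‖ₑ ^ (-(d - 2 - a)) * ‖x - y‖ₑ ^ (-a)) := by ring
      _ = _ := by rw [← hgf]; ring
  have holder (x : E) : ∫⁻ y, f y * ‖x - y‖ₑ ^ (2 - d) ∂μ ≤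
      (∫⁻ y, K x y * g y ∂μ) ^ q⁻¹ * G ^ d⁻¹ *
        (∫⁻ y, ‖x - y‖ₑ ^ (-(2 * a)) * ‖y‖ₑ ^ (-(2 * b)) ∂μ) ^ (2 : ℝ)⁻¹ := by
    have H := ENNReal.lintegral_prod_norm_pow_le (μ := μ) (Finset.univ : Finset (Fin 3))
      (f := ![fun y ↦ K x y * g y, g, fun y ↦ ‖x - y‖ₑ ^ (-(2 * a)) * ‖y‖ₑ ^ (-(2 * b))])
      (p := ![q⁻¹, d⁻¹, (2 : ℝ)⁻¹]) ?_ ?_ ?_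
    · simp only [Fin.prod_univ_three, Matrix.cons_val] at H
      refine le_trans (lintegral_mono_ae ?_) H
      filter_upwards [Measure.ae_ne μ 0, Measure.ae_ne μ x] with y hy hxy
      exact (pointwise x y hy hxy).le
    · intro i _
      fin_cases i
      · exact (hKgm x).aemeasurable
      · exact hgm.aemeasurable
      · exact Measurable.aemeasurable (f := fun y ↦ ‖x - y‖ₑ ^ (-(2 * a)) * ‖y‖ₑ ^ (-(2 * b)))
          (by fun_prop)
    · simp only [Fin.sum_univ_three, Matrix.cons_val]
      rw [hq]
      field_simp
      ring
    · intro i _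
      fin_cases i <;> simp <;> positivity
  have bound (x : E) (hx : x ≠ 0) : (∫⁻ y, f y * ‖x - y‖ₑ ^ (2 - d) ∂μ) ^ q ≤
      C₁ ^ (q / 2) * G ^ (q / d) *
        ∫⁻ y, ‖x‖ₑ ^ (-((a + b - d / 2) * q)) * (K x y * g y) ∂μ := by
    calc _ ≤ ((∫⁻ y, K x y * g y ∂μ) ^ q⁻¹ * G ^ d⁻¹ *
        (C₁ * ‖x‖ₑ ^ (d - 2 * a - 2 * b)) ^ (2 : ℝ)⁻¹) ^ q := by
          gcongr
          exact (holder x).trans (by gcongr; exact h₁ x hx)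
      _ = _ := by
          have e1 : (d - 2 * a - 2 * b) * ((2 : ℝ)⁻¹ * q) = -((a + b - d / 2) * q) := by ring
          rw [lintegral_const_mul _ (hKgm x),
            ENNReal.mul_rpow_of_nonneg _ _ (by positivity),
            ENNReal.mul_rpow_of_nonneg _ _ (by positivity),
            ENNReal.mul_rpow_of_nonneg _ _ (by positivity),
            ENNReal.mul_rpow_of_nonneg _ _ (by positivity), ENNReal.rpow_inv_rpow hq0.ne',
            ← ENNReal.rpow_mul, ← ENNReal.rpow_mul, ← ENNReal.rpow_mul, ← ENNReal.rpow_mul, e1,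
            inv_mul_eq_div, inv_mul_eq_div]
          ring
  have inner (y : E) (hy : y ≠ 0) :
      ∫⁻ x, ‖x‖ₑ ^ (-((a + b - d / 2) * q)) * (K x y * g y) ∂μ ≤ C₂ * g y := by
    have hY : ‖y‖ₑ ≠ 0 := by simpa using hy
    calc _ = (‖y‖ₑ ^ ((b - 1) * q) * g y) * ∫⁻ x, ‖y - x‖ₑ ^ (-((d - 2 - a) * q)) *
          ‖x‖ₑ ^ (-((a + b - d / 2) * q)) ∂μ := by
          rw [← lintegral_const_mul _ (by fun_prop)]
          refine lintegral_congr fun x ↦ ?_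
          simp only [hK, enorm_sub_rev x y]
          ring
      _ ≤ (‖y‖ₑ ^ ((b - 1) * q) * g y) *
          (C₂ * ‖y‖ₑ ^ (d - (d - 2 - a) * q - (a + b - d / 2) * q)) := by
          gcongr
          exact h₂ y hy
      _ = C₂ * g y * (‖y‖ₑ ^ ((b - 1) * q) *
          ‖y‖ₑ ^ (d - (d - 2 - a) * q - (a + b - d / 2) * q)) := by ring
      _ = C₂ * g y := by
          rw [← ENNReal.rpow_add _ _ hY (by simp), show (b - 1) * q +
            (d - (d - 2 - a) * q - (a + b - d / 2) * q) = 0 by linarith, ENNReal.rpow_zero, mul_one]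
  have hm : Measurable fun p : E × E ↦
      ‖p.1‖ₑ ^ (-((a + b - d / 2) * q)) * (K p.1 p.2 * g p.2) :=
    Measurable.mul (by fun_prop) (hKm.mul (hgm.comp measurable_snd))
  calc _ ≤ ∫⁻ x, C₁ ^ (q / 2) * G ^ (q / d) *
        ∫⁻ y, ‖x‖ₑ ^ (-((a + b - d / 2) * q)) * (K x y * g y) ∂μ ∂μ := by
        refine lintegral_mono_ae ?_
        filter_upwards [Measure.ae_ne μ 0] with x hx using bound x hx
    _ = C₁ ^ (q / 2) * G ^ (q / d) *
        ∫⁻ y, ∫⁻ x, ‖x‖ₑ ^ (-((a + b - d / 2) * q)) * (K x y * g y) ∂μ ∂μ := by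
        rw [lintegral_const_mul _ hm.lintegral_prod_right',
          lintegral_lintegral_swap hm.aemeasurable]
    _ ≤ C₁ ^ (q / 2) * G ^ (q / d) * ∫⁻ y, C₂ * g y ∂μ := by
        gcongr _ * ?_
        refine lintegral_mono_ae ?_
        filter_upwards [Measure.ae_ne μ 0] with y hy using inner y hy
    _ = C₁ ^ (q / 2) * C₂ * (G ^ (q / d) * G ^ (1 : ℝ)) := by
        rw [lintegral_const_mul _ hgm, ENNReal.rpow_one]
        ring
    _ = C₁ ^ (q / 2) * C₂ * G ^ (q / 2) := by
        rw [← ENNReal.rpow_add_of_nonneg _ _ (by positivity) zero_le_one]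
        congr 2
        rw [hq]
        field_simp
        ring

end RieszPotential

lemma SchwartzMap.integrable_one_add_norm_sq_mul_norm_sq {E F : Type*} [NormedAddCommGroup E]
    [NormedSpace ℝ E] [FiniteDimensional ℝ E] [MeasurableSpace E] [BorelSpace E]
    [NormedAddCommGroup F] [NormedSpace ℝ F] (μ : Measure E) [μ.HasTemperateGrowth]
    (ψ : SchwartzMap E F) :
    Integrable (fun x ↦ (1 + ‖x‖ ^ 2) * ‖ψ x‖ ^ 2) μ := by
  obtain ⟨C, hC⟩ := ψ.decay 0 0
  have h := ((ψ.integrable_pow_mul μ 0).add (ψ.integrable_pow_mul μ 2)).mul_const C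
  have := ψ.continuous
  refine h.mono' (Continuous.aestronglyMeasurable (by fun_prop)) (.of_forall fun x ↦ ?_)
  have hx : ‖ψ x‖ ≤ C := by simpa using hC.2 x
  rw [Real.norm_of_nonneg (by positivity)]
  simp only [Pi.add_apply, pow_zero, one_mul]
  calc _ = (‖ψ x‖ + ‖x‖ ^ 2 * ‖ψ x‖) * ‖ψ x‖ := by ring
    _ ≤ _ := by gcongr

/-- Convolution with the Riesz kernel `|x|^{2-n}` maps the weighted
space `⟨x⟩⁻¹L²` into `L^{2n/(n-2)}`. -/
theorem riesz_kernel_weighted_bound (n : ℕ) (hn : 3 ≤ n) :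
    ∃ C : ℝ, 0 < C ∧ ∀ ψ : SchwartzMap (EuclideanSpace ℝ (Fin n)) ℂ,
      eLpNorm (fun x : EuclideanSpace ℝ (Fin n) =>
          ∫ y : EuclideanSpace ℝ (Fin n), ψ y * ((‖x - y‖ ^ ((2 : ℝ) - n) : ℝ) : ℂ))
        (ENNReal.ofReal (2 * (n : ℝ) / ((n : ℝ) - 2))) volume
      ≤ ENNReal.ofReal (C * Real.sqrt (∫ x : EuclideanSpace ℝ (Fin n),
          (1 + ‖x‖ ^ 2) * ‖ψ x‖ ^ 2)) := by
  obtain ⟨q, hq⟩ : ∃ q : ℝ, q = 2 * n / (n - 2) := ⟨_, rfl⟩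
  have hn3 : (3 : ℝ) ≤ n := by exact_mod_cast hn
  have hq0 : 0 < q := by
    have : (0 : ℝ) < n - 2 := by linarith
    rw [hq]; positivity
  obtain ⟨C, hC, h⟩ := exists_lintegral_riesz_potential_rpow_le
    (E := EuclideanSpace ℝ (Fin n)) (μ := volume) (q := q) (by simpa using hn) (by simpa using hq)
  simp only [finrank_euclideanSpace, Fintype.card_fin] at h
  have hCq : C ^ q⁻¹ ≠ ⊤ := ENNReal.rpow_ne_top_of_nonneg (by positivity) hC
  refine ⟨(C ^ q⁻¹).toReal + 1, by positivity, fun ψ ↦ ?_⟩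
  rw [← hq, eLpNorm_eq_lintegral_rpow_enorm_toReal (by simpa using hq0) (by simp),
    ENNReal.toReal_ofReal hq0.le]
  have hker (x : EuclideanSpace ℝ (Fin n)) :
      ‖∫ y, ψ y * ((‖x - y‖ ^ ((2 : ℝ) - n) : ℝ) : ℂ)‖ₑ ≤
        ∫⁻ y, ‖ψ y‖ₑ * ‖x - y‖ₑ ^ ((2 : ℝ) - n) := by
    refine (enorm_integral_le_lintegral_enorm _).trans (lintegral_mono fun y ↦ ?_)
    rw [enorm_mul]
    gcongr
    rcases eq_or_ne (x - y) 0 with h0 | h0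
    · simp [h0, ENNReal.zero_rpow_of_neg (show (2 : ℝ) - n < 0 by linarith)]
    · have h0' : 0 < ‖x - y‖ := norm_pos_iff.mpr h0
      rw [← ofReal_norm, ← ofReal_norm (x - y), ENNReal.ofReal_rpow_of_pos h0', Complex.norm_real,
        Real.norm_of_nonneg (by positivity)]
  have hweight : ∫⁻ y, (‖y‖ₑ * ‖ψ y‖ₑ) ^ (2 : ℝ) ≤
      ENNReal.ofReal (∫ x, (1 + ‖x‖ ^ 2) * ‖ψ x‖ ^ 2) := by
    rw [ofReal_integral_eq_lintegral_ofReal (ψ.integrable_one_add_norm_sq_mul_norm_sq volume)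
      (.of_forall fun x ↦ by positivity)]
    refine lintegral_mono fun y ↦ ?_
    rw [← ofReal_norm, ← ofReal_norm, ← ENNReal.ofReal_mul (norm_nonneg _), ENNReal.rpow_two,
      ← ENNReal.ofReal_pow (by positivity)]
    apply ENNReal.ofReal_le_ofReal
    rw [mul_pow]
    gcongr
    linarith
  set I := ∫ x, (1 + ‖x‖ ^ 2) * ‖ψ x‖ ^ 2
  have hI0 : 0 ≤ I := integral_nonneg fun x ↦ by positivity
  calc _ ≤ (C * ENNReal.ofReal I ^ (q / 2)) ^ (1 / q) := by
        gcongr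
        refine (lintegral_mono fun x ↦ ENNReal.rpow_le_rpow (hker x) hq0.le).trans
          ((h _ ψ.continuous.measurable.enorm).trans ?_)
        gcongr
    _ = C ^ q⁻¹ * ENNReal.ofReal (√I) := by
        rw [one_div, ENNReal.mul_rpow_of_nonneg _ _ (by positivity), ← ENNReal.rpow_mul,
          Real.sqrt_eq_rpow, ← ENNReal.ofReal_rpow_of_nonneg hI0 (by norm_num),
          show q / 2 * q⁻¹ = 1 / 2 by field_simp]
    _ ≤ _ := by
        rw [ENNReal.ofReal_mul (by positivity)]
        gcongr
        rw [← ENNReal.ofReal_toReal hCq]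
        exact ENNReal.ofReal_le_ofReal (by simp)
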